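/- arXiv:0801.3109 — 3 statements merged into one kernel-verified Lean document; each statement's English description precedes it below -/
import Mathlib

section
/- Let γ > 1. Let α and α' be irrational numbers whose continued fraction convergents have denominators q_n and q'_n respectively, satisfying, for all sufficiently large n, q'_n ≥ q_n^γ and q_{n+1} ≥ (q'_n)^γ. Let T be the translation of the two-torus T² by the vector (α, α'). Then for every point x₀ ∈ T², for Lebesgue-almost every x ∈ T², the lower hitting time indicator satisfies R̲(x,x₀) = liminf_{r→0} log τ_r(x,x₀)/(−log r) ≥ γ. -/
/-!
Write `q_n`, `q'_n` for the denominators of `α`, `α'`, and fix `δ > 0`. Since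
`‖q_n α‖ ≤ 1 / q_{n+1}`, the first coordinate of the orbit stays within distance about
`q_n ^ (-1-δ)` of the set `x + (1 / q_n) ℤ` up to time `q_n ^ (-δ) q_{n+1}`. A visit to the
`q_n ^ (-1-δ)`-ball around the target `c` during that time forces `‖q_n (x - c)‖ ≤ 2 q_n ^ (-δ)`,
which has measure at most `4 q_n ^ (-δ)` because multiplication by `q_n` preserves Lebesgue measure.
These measures are summable, as `q_n ^ γ ≤ q_{n+1}`, so almost surely only finitely many
such early visits occur (`rotation_ae`). The same holds for `α'`.

Now let `r` be small, with `q_{n+1} ^ (-1-δ) < r ≤ q_n ^ (-1-δ)`. If `r ≥ q'_n ^ (-1-δ)`, the first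
coordinate gives `τ_r ≥ q_n ^ (-δ) q_{n+1} ≥ q'_n ^ (γ-δ)`; otherwise the second one gives
`τ_r ≥ q'_n ^ (-δ) q'_{n+1} ≥ q_{n+1} ^ (γ-δ)`. In both cases `τ_r ≥ r ^ (-(γ-δ)/(1+δ))`
(`le_Rlower`), and `δ → 0` gives the exponent `γ`.
-/

open Filter MeasureTheory Metric Topology ENNReal

/-- Hitting time of the orbit of `x` into the ball `B(x₀,r)` (as extended natural, `⊤` if never). -/
noncomputable def hitTime {X : Type*} [PseudoMetricSpace X] (T : X → X) (x x₀ : X) (r : ℝ) : ℕ∞ :=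
  sInf {N : ℕ∞ | ∃ n : ℕ, N = n ∧ 1 ≤ n ∧ T^[n] x ∈ Metric.ball x₀ r}

/-- The ratio `log τ_r(x,x₀) / (- log r)`, with values in the extended reals. -/
noncomputable def hitRatio {X : Type*} [PseudoMetricSpace X] (T : X → X) (x x₀ : X) (r : ℝ) :
    EReal :=
  ENNReal.log ((hitTime T x x₀ r : ℕ∞) : ℝ≥0∞) / ((-Real.log r : ℝ) : EReal)

/-- Upper hitting time indicator `R̄(x,x₀)`. -/
noncomputable def Rupper {X : Type*} [PseudoMetricSpace X] (T : X → X) (x x₀ : X) : EReal :=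
  limsup (hitRatio T x x₀) (𝓝[>] (0:ℝ))

/-- Lower hitting time indicator `R̲(x,x₀)`. -/
noncomputable def Rlower {X : Type*} [PseudoMetricSpace X] (T : X → X) (x x₀ : X) : EReal :=
  liminf (hitRatio T x x₀) (𝓝[>] (0:ℝ))

/-- The ratio `log μ(B(x₀,r)) / log r`, with values in the extended reals. -/
noncomputable def dimRatio {X : Type*} [PseudoMetricSpace X] [MeasurableSpace X]
    (μ : Measure X) (x₀ : X) (r : ℝ) : EReal :=
  ENNReal.log (μ (Metric.ball x₀ r)) / ((Real.log r : ℝ) : EReal)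

/-- Upper local dimension of `μ` at `x₀`. -/
noncomputable def dimUpper {X : Type*} [PseudoMetricSpace X] [MeasurableSpace X]
    (μ : Measure X) (x₀ : X) : EReal :=
  limsup (dimRatio μ x₀) (𝓝[>] (0:ℝ))

/-- Lower local dimension of `μ` at `x₀`. -/
noncomputable def dimLower {X : Type*} [PseudoMetricSpace X] [MeasurableSpace X]
    (μ : Measure X) (x₀ : X) : EReal :=
  liminf (dimRatio μ x₀) (𝓝[>] (0:ℝ))

/-- Correlation-decay inequality for all (bounded) Lipschitz observables, where the Lipschitz
norm of an observable is (a bound on) its sup norm plus (a bound on) its Lipschitz constant. -/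
def CorrDecayWith {X : Type*} [PseudoMetricSpace X] [MeasurableSpace X]
    (T : X → X) (μ : Measure X) (Φ : ℕ → ℝ) : Prop :=
  ∀ (φ ψ : X → ℝ) (Kφ Kψ : NNReal) (Bφ Bψ : ℝ),
    LipschitzWith Kφ φ → LipschitzWith Kψ ψ →
    (∀ x, |φ x| ≤ Bφ) → (∀ x, |ψ x| ≤ Bψ) →
    ∀ n : ℕ,
      |(∫ x, φ (T^[n] x) * ψ x ∂μ) - (∫ x, φ x ∂μ) * ∫ x, ψ x ∂μ| ≤
        (Bφ + Kφ) * (Bψ + Kψ) * Φ n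

/-- Decay of correlations with power law speed of exponent `p`. -/
def PowerLawDecay {X : Type*} [PseudoMetricSpace X] [MeasurableSpace X]
    (T : X → X) (μ : Measure X) (p : ℝ) : Prop :=
  ∃ Φ : ℕ → ℝ, (∀ n, 0 ≤ Φ n) ∧
    Tendsto (fun n : ℕ => -Real.log (Φ n) / Real.log n) atTop (𝓝 p) ∧
    CorrDecayWith T μ Φ

/-- Denominators of the convergents of the continued fraction expansion of `α`. -/
noncomputable def cfDen (α : ℝ) (n : ℕ) : ℝ := (GenContFract.of α).dens n

/-- Distance of a real number to the nearest integer. -/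
noncomputable def intDist (x : ℝ) : ℝ := |x - round x|

/-! ### Denominators of continued fractions -/

lemma irr_not_terminatedAt {β : ℝ} (hβ : Irrational β) (n : ℕ) :
    ¬ (GenContFract.of β).TerminatedAt n := by
  intro h
  obtain ⟨q, hq⟩ := (GenContFract.terminates_iff_rat β).1 ⟨n, h⟩
  exact hβ ⟨q, hq.symm⟩

/-- Continuants are integers; two consecutive ones are carried along for the recurrence. -/
lemma exists_int_contsAux {β : ℝ} (hβ : Irrational β) (n : ℕ) :
    (∃ a b : ℤ, (GenContFract.of β).contsAux n = ⟨a, b⟩) ∧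
    (∃ a b : ℤ, (GenContFract.of β).contsAux (n + 1) = ⟨a, b⟩) := by
  induction n with
  | zero =>
    exact ⟨⟨1, 0, by simp [GenContFract.contsAux]⟩,
      ⟨⌊β⌋, 1, by simp [GenContFract.contsAux]⟩⟩
  | succ n ih =>
    obtain ⟨⟨a, b, h0⟩, ⟨c, d, h1⟩⟩ := ih
    refine ⟨⟨c, d, h1⟩, ?_⟩
    obtain ⟨gp, hgp⟩ := Option.ne_none_iff_exists'.1 (irr_not_terminatedAt hβ n)
    obtain ⟨hga, z, hz⟩ := GenContFract.of_partNum_eq_one_and_exists_int_partDen_eq hgp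
    refine ⟨z * c + a, z * d + b, ?_⟩
    rw [GenContFract.contsAux_recurrence hgp h0 h1, hga, hz]
    push_cast
    simp

lemma fib_le_cfDen {β : ℝ} (hβ : Irrational β) (n : ℕ) : (Nat.fib (n + 1) : ℝ) ≤ cfDen β n :=
  GenContFract.succ_nth_fib_le_of_nth_den (Or.inr (irr_not_terminatedAt hβ _))

lemma one_le_cfDen {β : ℝ} (hβ : Irrational β) (n : ℕ) : 1 ≤ cfDen β n :=
  le_trans (by exact_mod_cast Nat.fib_pos.2 n.succ_pos) (fib_le_cfDen hβ n)

lemma cfDen_mono (β : ℝ) : Monotone (cfDen β) :=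
  monotone_nat_of_le_succ fun _ => GenContFract.of_den_mono

lemma tendsto_cfDen {β : ℝ} (hβ : Irrational β) : Tendsto (cfDen β) atTop atTop := by
  refine tendsto_atTop_mono (fib_le_cfDen hβ) ?_
  refine tendsto_natCast_atTop_atTop.comp ((tendsto_add_atTop_iff_nat 1).2 ?_)
  refine tendsto_atTop_mono' atTop ?_ tendsto_id
  filter_upwards [eventually_ge_atTop 5] with n hn
  exact Nat.le_fib_self hn

/-- The denominator `q_n` is a positive integer and `‖q_n β‖ ≤ 1 / q_{n+1}`. -/
lemma exists_nat_cfDen {β : ℝ} (hβ : Irrational β) (n : ℕ) :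
    ∃ (q : ℕ) (p : ℤ), cfDen β n = q ∧ |q * β - p| ≤ 1 / cfDen β (n + 1) := by
  obtain ⟨-, p, b, hpb⟩ := exists_int_contsAux hβ n
  have hd : cfDen β n = b := by
    rw [cfDen, GenContFract.den_eq_conts_b, GenContFract.nth_cont_eq_succ_nth_contAux, hpb]
  have hp : (GenContFract.of β).nums n = p := by
    rw [GenContFract.num_eq_conts_a, GenContFract.nth_cont_eq_succ_nth_contAux, hpb]
  have h1 := one_le_cfDen hβ n
  have hb : 0 ≤ b := by
    rw [hd] at h1
    exact_mod_cast zero_le_one.trans h1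
  obtain ⟨q, rfl⟩ := Int.eq_ofNat_of_zero_le hb
  refine ⟨q, p, by simpa using hd, ?_⟩
  have h := GenContFract.abs_sub_convs_le (v := β) (irr_not_terminatedAt hβ n)
  rw [GenContFract.conv_eq_num_div_den, hp] at h
  change |β - p / cfDen β n| ≤ 1 / (cfDen β n * cfDen β (n + 1)) at h
  have hq : cfDen β n = q := by simpa using hd
  rw [hq] at h h1
  have h2 := one_le_cfDen hβ (n + 1)
  have hq0 : (0 : ℝ) < q := by linarith
  calc |q * β - p| = q * |β - p / q| := by
        rw [← abs_of_pos hq0, ← abs_mul, abs_of_pos hq0]; congr 1; field_simp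
    _ ≤ q * (1 / (q * cfDen β (n + 1))) := by gcongr
    _ = _ := by field_simp

/-- A sequence with `u_n ^ γ ≤ u_{n+1}`, `γ > 1`, grows faster than any geometric one, so all its
negative powers are summable. -/
lemma summable_rpow_neg {u : ℕ → ℝ} {γ δ : ℝ} (hγ : 1 < γ) (hδ : 0 < δ) (hu1 : ∀ n, 1 ≤ u n)
    (hu : Tendsto u atTop atTop) (hg : ∀ᶠ n in atTop, u n ^ γ ≤ u (n + 1)) :
    Summable fun n => u n ^ (-δ) := by
  refine summable_of_ratio_norm_eventually_le (r := 1 / 2) (by norm_num) ?_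
  have ht : Tendsto (fun n => u n ^ (-((γ - 1) * δ))) atTop (𝓝 0) :=
    (tendsto_rpow_neg_atTop (mul_pos (by linarith) hδ)).comp hu
  filter_upwards [hg, ht.eventually_le_const (show (0 : ℝ) < 1 / 2 by norm_num)] with n h1 h2
  have h0 : 0 < u n := by linarith [hu1 n]
  have h0' : 0 < u (n + 1) := by linarith [hu1 (n + 1)]
  rw [Real.norm_of_nonneg (by positivity), Real.norm_of_nonneg (by positivity)]
  calc u (n + 1) ^ (-δ) ≤ (u n ^ γ) ^ (-δ) :=
        Real.rpow_le_rpow_of_nonpos (by positivity) h1 (by linarith)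
    _ = u n ^ (-((γ - 1) * δ)) * u n ^ (-δ) := by
        rw [← Real.rpow_mul h0.le, ← Real.rpow_add h0]; congr 1; ring
    _ ≤ 1 / 2 * u n ^ (-δ) := by gcongr

/-! ### Early visits of a single rotation -/

lemma norm_nsmul_coe_le {β : ℝ} (n k q : ℕ) (p : ℤ)
    (hp : |q * β - p| ≤ 1 / cfDen β (n + 1)) :
    ‖q • (k • (β : AddCircle (1 : ℝ)))‖ ≤ k / cfDen β (n + 1) := by
  have h1 : q • (β : AddCircle (1 : ℝ)) = ((q * β - p : ℝ) : AddCircle (1 : ℝ)) := by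
    rw [AddCircle.coe_sub, ← nsmul_eq_mul, AddCircle.coe_nsmul]
    have : ((p : ℝ) : AddCircle (1 : ℝ)) = 0 :=
      AddCircle.coe_eq_zero_iff (1 : ℝ) |>.2 ⟨p, by simp⟩
    rw [this, sub_zero]
  have h2 : ‖q • (β : AddCircle (1 : ℝ))‖ ≤ 1 / cfDen β (n + 1) := by
    rw [h1]
    exact (QuotientAddGroup.norm_mk_le_norm.trans (by rw [Real.norm_eq_abs])).trans hp
  rw [smul_comm]
  calc _ ≤ (k : ℝ) * ‖q • (β : AddCircle (1 : ℝ))‖ := norm_nsmul_le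
    _ ≤ k * (1 / cfDen β (n + 1)) := by gcongr
    _ = _ := by ring

/-- For almost every `x`, at each late scale `q_n ^ (-1-δ)` the orbit of `x` under the rotation by
`β` stays outside the ball around `c` up to time `q_n ^ (-δ) * q_{n+1}`. Up to that time the orbit
stays close to `x` modulo `1 / q_n`, so an early visit forces `‖q_n (x - c)‖ ≤ 2 q_n ^ (-δ)`, a
condition of measure at most `4 q_n ^ (-δ)`; Borel–Cantelli concludes. -/
lemma rotation_ae {β γ δ : ℝ} (hβ : Irrational β) (hγ : 1 < γ) (hδ : 0 < δ)
    (hg : ∀ᶠ n in atTop, cfDen β n ^ γ ≤ cfDen β (n + 1)) (c : AddCircle (1 : ℝ)) :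
    ∀ᵐ x ∂(volume : Measure (AddCircle (1 : ℝ))), ∀ᶠ n in atTop, ∀ k : ℕ,
      dist (x + k • (β : AddCircle (1 : ℝ))) c < cfDen β n ^ (-(1 + δ)) →
        cfDen β n ^ (-δ) * cfDen β (n + 1) ≤ k := by
  have hsum := summable_rpow_neg hγ hδ (one_le_cfDen hβ) (tendsto_cfDen hβ) hg
  choose q p hq hp using exists_nat_cfDen hβ
  have hq1 : ∀ᶠ n in atTop, 1 < q n := by
    filter_upwards [(tendsto_cfDen hβ).eventually_gt_atTop 1] with n hn
    rw [hq n] at hn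
    exact_mod_cast hn
  obtain ⟨N, hN⟩ := eventually_atTop.1 hq1
  -- The index is shifted by `N` so that multiplication by `q (n + N) > 1` preserves the measure.
  let S : ℕ → Set (AddCircle (1 : ℝ)) := fun n =>
    (fun x => q (n + N) • (x - c)) ⁻¹' closedBall 0 (2 * cfDen β (n + N) ^ (-δ))
  have hS : ∀ n, volume (S n) ≤ ENNReal.ofReal (4 * cfDen β (n + N) ^ (-δ)) := by
    intro n
    have hmp := (AddCircle.ergodic_nsmul (T := (1 : ℝ))
      (hN (n + N) (Nat.le_add_left _ _))).toMeasurePreserving.comp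
      (measurePreserving_sub_right (volume : Measure (AddCircle (1 : ℝ))) c)
    have := hmp.measure_preimage
      (s := closedBall 0 (2 * cfDen β (n + N) ^ (-δ))) measurableSet_closedBall.nullMeasurableSet
    refine (this.trans (AddCircle.volume_closedBall (1 : ℝ) _)).le.trans ?_
    refine ENNReal.ofReal_le_ofReal ((min_le_right _ _).trans (le_of_eq (by ring)))
  have hfin : ∑' n, volume (S n) ≠ ∞ := by
    refine ne_top_of_le_ne_top ?_ (ENNReal.tsum_le_tsum hS)
    exact (((summable_nat_add_iff N).2 hsum).mul_left 4).tsum_ofReal_ne_top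
  filter_upwards [ae_eventually_notMem hfin] with x hx
  obtain ⟨M, hM⟩ := eventually_atTop.1 hx
  filter_upwards [eventually_ge_atTop (M + N)] with n hn k hk
  have hnS := hM (n - N) (by omega)
  have hnN : n - N + N = n := by omega
  simp only [S, hnN, Set.mem_preimage, mem_closedBall, dist_zero_right, not_le] at hnS
  have h0 : 0 < cfDen β n := by linarith [one_le_cfDen hβ n]
  have h0' : 0 < cfDen β (n + 1) := by linarith [one_le_cfDen hβ (n + 1)]
  have hdec : q n • (x - c) = q n • (x + k • (β : AddCircle (1 : ℝ)) - c)
      - q n • (k • (β : AddCircle (1 : ℝ))) := by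
    rw [← smul_sub]; congr 1; abel
  have h1 : ‖q n • (x + k • (β : AddCircle (1 : ℝ)) - c)‖ ≤ cfDen β n ^ (-δ) := by
    calc _ ≤ (q n : ℝ) * ‖x + k • (β : AddCircle (1 : ℝ)) - c‖ := norm_nsmul_le
      _ ≤ cfDen β n * cfDen β n ^ (-(1 + δ)) := by
        rw [← hq n, ← dist_eq_norm]; gcongr
      _ = cfDen β n ^ (-δ) := by
        nth_rewrite 1 [← Real.rpow_one (cfDen β n)]
        rw [← Real.rpow_add h0]; congr 1; ring
  have h2 := norm_nsmul_coe_le n k (q n) (p n) (hp n)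
  rw [hdec] at hnS
  have h3 := norm_sub_le (q n • (x + k • (β : AddCircle (1 : ℝ)) - c))
    (q n • (k • (β : AddCircle (1 : ℝ))))
  have h4 : cfDen β n ^ (-δ) ≤ k / cfDen β (n + 1) := by linarith
  exact (le_div_iff₀ h0').1 h4

/-! ### Combining the two rotations -/

/-- Comparison of three consecutive scales `u ≤ v` and `w ≥ v ^ γ`, where `u` and `w` are consecutive
denominators of one rotation number and `v` is the intermediate denominator of the other: at radii
`r ≥ v ^ (-1-δ)`, the waiting time `u ^ (-δ) * w` is at least `r ^ (-(γ-δ)/(1+δ))`. -/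
lemma scale_bound {γ δ r u v w : ℝ} (hδ : 0 < δ) (hδγ : δ < γ) (hu : 1 ≤ u)
    (huv : u ≤ v) (hvw : v ^ γ ≤ w) (hrv : v ^ (-(1 + δ)) ≤ r) :
    r ^ (-((γ - δ) / (1 + δ))) ≤ u ^ (-δ) * w := by
  have hu0 : 0 < u := by linarith
  have hv0 : 0 < v := by linarith
  calc r ^ (-((γ - δ) / (1 + δ))) ≤ (v ^ (-(1 + δ))) ^ (-((γ - δ) / (1 + δ))) := by
        refine Real.rpow_le_rpow_of_nonpos (by positivity) hrv ?_
        have : 0 ≤ (γ - δ) / (1 + δ) := div_nonneg (by linarith) (by linarith)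
        linarith
    _ = v ^ (-δ) * v ^ γ := by
        rw [← Real.rpow_mul hv0.le, ← Real.rpow_add hv0]
        congr 1
        field_simp
        ring
    _ ≤ u ^ (-δ) * w := by
        have := Real.rpow_le_rpow_of_nonpos hu0 huv (show -δ ≤ 0 by linarith)
        gcongr

/-- A lower bound on all visit times bounds the ratio, including when there is no visit and the
hitting time is `⊤`. -/
lemma le_hitRatio {X : Type*} [PseudoMetricSpace X] {T : X → X} {x x₀ : X} {r s : ℝ}
    (hr : 0 < r) (hr1 : r < 1)
    (h : ∀ k : ℕ, 1 ≤ k → T^[k] x ∈ ball x₀ r → r ^ (-s) ≤ k) :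
    (s : EReal) ≤ hitRatio T x x₀ r := by
  have hlog : 0 < -Real.log r := neg_pos.2 (Real.log_neg hr hr1)
  have hτ : ENNReal.ofReal (r ^ (-s)) ≤ ((hitTime T x x₀ r : ℕ∞) : ℝ≥0∞) := by
    rcases Set.eq_empty_or_nonempty {N : ℕ∞ | ∃ n : ℕ, N = n ∧ 1 ≤ n ∧ T^[n] x ∈ ball x₀ r}
      with he | hne
    · rw [hitTime, he]
      simp
    · obtain ⟨k, hk, hk1, hkb⟩ := csInf_mem hne
      rw [hitTime, hk]
      simpa using ENNReal.ofReal_le_ofReal (h k hk1 hkb)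
  rw [hitRatio, EReal.le_div_iff_mul_le (by exact_mod_cast hlog) (EReal.coe_ne_top _)]
  refine le_trans (le_of_eq ?_) (ENNReal.log_monotone hτ)
  rw [ENNReal.log_ofReal_of_pos (by positivity), Real.log_rpow hr, ← EReal.coe_mul]
  congr 1
  ring

lemma iterate_translation (α α' : ℝ) (k : ℕ) (x : AddCircle (1 : ℝ) × AddCircle (1 : ℝ)) :
    (fun p : AddCircle (1 : ℝ) × AddCircle (1 : ℝ) =>
      (p.1 + (α : AddCircle (1 : ℝ)), p.2 + (α' : AddCircle (1 : ℝ))))^[k] x =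
      (x.1 + k • (α : AddCircle (1 : ℝ)), x.2 + k • (α' : AddCircle (1 : ℝ))) := by
  induction k with
  | zero => simp
  | succ k ih => rw [Function.iterate_succ_apply', ih]; simp [succ_nsmul, add_assoc]

/-- The lower bound at a point `x` both of whose coordinates visit late. For `r` between
`q_{n+1} ^ (-1-δ)` and `q_n ^ (-1-δ)`, the first coordinate delays the visit when
`r ≥ q'_n ^ (-1-δ)`, and the second coordinate does for the smaller `r`. -/
lemma le_Rlower {γ δ α α' : ℝ} (hγ : 1 < γ) (hδ : 0 < δ) (hδ1 : δ < 1) (hα : Irrational α)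
    (hα' : Irrational α')
    (hq : ∀ᶠ n : ℕ in atTop,
      (cfDen α n) ^ γ ≤ cfDen α' n ∧ (cfDen α' n) ^ γ ≤ cfDen α (n + 1))
    (x₀ x : AddCircle (1:ℝ) × AddCircle (1:ℝ))
    (h1 : ∀ᶠ n in atTop, ∀ k : ℕ,
      dist (x.1 + k • (α : AddCircle (1 : ℝ))) x₀.1 < cfDen α n ^ (-(1 + δ)) →
        cfDen α n ^ (-δ) * cfDen α (n + 1) ≤ k)
    (h2 : ∀ᶠ n in atTop, ∀ k : ℕ,
      dist (x.2 + k • (α' : AddCircle (1 : ℝ))) x₀.2 < cfDen α' n ^ (-(1 + δ)) →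
        cfDen α' n ^ (-δ) * cfDen α' (n + 1) ≤ k) :
    (((γ - δ) / (1 + δ) : ℝ) : EReal) ≤
      Rlower (fun p => (p.1 + (α : AddCircle (1:ℝ)), p.2 + (α' : AddCircle (1:ℝ)))) x x₀ := by
  obtain ⟨N, hN⟩ := eventually_atTop.1 (hq.and (h1.and h2))
  have hlim : Tendsto (fun n => cfDen α n ^ (-(1 + δ))) atTop (𝓝 0) :=
    (tendsto_rpow_neg_atTop (by linarith)).comp (tendsto_cfDen hα)
  have hpos : 0 < cfDen α N ^ (-(1 + δ)) :=
    Real.rpow_pos_of_pos (by linarith [one_le_cfDen hα N]) _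
  refine le_liminf_of_le (by isBoundedDefault) ?_
  filter_upwards [Ioo_mem_nhdsGT (show (0 : ℝ) < min 1 (cfDen α N ^ (-(1 + δ))) by
    exact lt_min one_pos hpos)] with r hr
  obtain ⟨hr0, hr'⟩ := hr
  obtain ⟨hr1, hrN⟩ := lt_min_iff.1 hr'
  refine le_hitRatio hr0 hr1 fun k _ hk => ?_
  rw [iterate_translation, mem_ball, Prod.dist_eq, max_lt_iff] at hk
  -- `n + 1` is the first index with `q_{n+1} ^ (-1-δ) < r`.
  have hex : ∃ m, cfDen α m ^ (-(1 + δ)) < r := (hlim.eventually_lt_const hr0).exists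
  classical
  obtain ⟨n, hNn, hn, hn'⟩ : ∃ n, N ≤ n ∧ r ≤ cfDen α n ^ (-(1 + δ)) ∧
      cfDen α (n + 1) ^ (-(1 + δ)) < r := by
    have hf := Nat.find_spec hex
    have hNf : N < Nat.find hex := by
      by_contra! hcon
      have := Real.rpow_le_rpow_of_nonpos (by linarith [one_le_cfDen hα (Nat.find hex)])
        (cfDen_mono α hcon) (show -(1 + δ) ≤ 0 by linarith)
      linarith
    refine ⟨Nat.find hex - 1, by omega, ?_, ?_⟩
    · exact not_lt.1 (Nat.find_min hex (by omega))
    · rwa [Nat.sub_add_cancel (by omega)]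
  obtain ⟨⟨hqa, hqb⟩, hka, hkb⟩ := hN n hNn
  obtain ⟨⟨hqc, -⟩, -⟩ := hN (n + 1) (by omega)
  have hu := one_le_cfDen hα n
  have hu' := one_le_cfDen hα' n
  rcases le_total (cfDen α' n ^ (-(1 + δ))) r with hc | hc
  · refine (scale_bound hδ (by linarith) hu ?_ hqb hc).trans
      (hka k (hk.1.trans_le hn))
    exact (Real.self_le_rpow_of_one_le hu hγ.le).trans hqa
  · refine (scale_bound hδ (by linarith) hu' ?_ hqc hn'.le).trans
      (hkb k (hk.2.trans_le hc))
    exact (Real.self_le_rpow_of_one_le hu' hγ.le).trans hqb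

/-- **Theorem A.** For a translation of the two-torus by `(α, α')` whose continued fraction
denominators are `γ`-intertwined, the lower hitting time indicator is at least `γ`
at every target point `x₀`, for Lebesgue-almost every `x`. -/
theorem stmt_0 (γ α α' : ℝ) (hγ : 1 < γ) (hα : Irrational α) (hα' : Irrational α')
    (hq : ∀ᶠ n : ℕ in atTop,
      (cfDen α n) ^ γ ≤ cfDen α' n ∧ (cfDen α' n) ^ γ ≤ cfDen α (n + 1))
    (x₀ : AddCircle (1:ℝ) × AddCircle (1:ℝ)) :
    ∀ᵐ x ∂(volume : Measure (AddCircle (1:ℝ) × AddCircle (1:ℝ))),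
      (γ : EReal) ≤
        Rlower (fun p => (p.1 + (α : AddCircle (1:ℝ)), p.2 + (α' : AddCircle (1:ℝ)))) x x₀ := by
  have hga : ∀ᶠ n in atTop, cfDen α n ^ γ ≤ cfDen α (n + 1) := by
    filter_upwards [hq] with n hn
    exact hn.1.trans ((Real.self_le_rpow_of_one_le (one_le_cfDen hα' n) hγ.le).trans hn.2)
  have hgb : ∀ᶠ n in atTop, cfDen α' n ^ γ ≤ cfDen α' (n + 1) := by
    filter_upwards [hq, (tendsto_add_atTop_nat 1).eventually hq] with n hn hm
    exact hn.2.trans ((Real.self_le_rpow_of_one_le (one_le_cfDen hα _) hγ.le).trans hm.1)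
  -- The bound `(γ - δ) / (1 + δ)` holds almost surely for each `δ` along a sequence tending to `0`.
  obtain ⟨δ, -, hδ, hδlim⟩ := exists_seq_strictAnti_tendsto' (show (0 : ℝ) < 1 by norm_num)
  have hae : ∀ᵐ x ∂(volume : Measure (AddCircle (1:ℝ) × AddCircle (1:ℝ))), ∀ m : ℕ,
      (((γ - δ m) / (1 + δ m) : ℝ) : EReal) ≤
        Rlower (fun p => (p.1 + (α : AddCircle (1:ℝ)), p.2 + (α' : AddCircle (1:ℝ)))) x x₀ := by
    rw [ae_all_iff]
    intro m
    filter_upwards [Measure.quasiMeasurePreserving_fst.ae (rotation_ae hα hγ (hδ m).1 hga x₀.1),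
      Measure.quasiMeasurePreserving_snd.ae (rotation_ae hα' hγ (hδ m).1 hgb x₀.2)] with x h1 h2
    exact le_Rlower hγ (hδ m).1 (hδ m).2 hα hα' hq x₀ x h1 h2
  filter_upwards [hae] with x hx
  have hlim : Tendsto (fun m => (γ - δ m) / (1 + δ m)) atTop (𝓝 γ) := by
    have : Tendsto (fun m => (γ - δ m) / (1 + δ m)) atTop (𝓝 ((γ - 0) / (1 + 0))) :=
      (tendsto_const_nhds.sub hδlim).div (tendsto_const_nhds.add hδlim) (by norm_num)
    simpa only [add_zero, sub_zero, div_one] using this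
  exact le_of_tendsto' ((continuous_coe_real_ereal.tendsto γ).comp hlim) hx
end

section
/- Let T_α be an irrational rotation of the circle S¹ = ℝ/ℤ with Lebesgue probability measure μ, with continued fraction convergent denominators q_n, and let τ_r^α(x) denote the hitting time of the orbit of x into the ball of radius r centered at 0. If r > 0 satisfies ‖q_n α‖ < 2r ≤ ‖q_{n−1} α‖ for some n ≥ 1, then μ{x : τ_r^α(x) = k} = 2r for every integer k with 1 ≤ k ≤ q_n, and μ{x : τ_r^α(x) = k} ≤ ‖q_n α‖ for every integer k > q_n. -/
/-!
Write `B = B(0, r)`. The set `{τ = k}` is `T^{-k} B` with the earlier preimages `T^{-j} B`,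
`1 ≤ j < k`, removed, and each `T^{-j} B` is the ball of radius `r` around `-jα`.

* If `k ≤ qₙ`, the centres `-kα` and `-jα` are at distance `‖(k - j)α‖` with `0 < k - j < qₙ`.
  By the best approximation property (`le_norm_nsmul_of_lt_cfDen`) this is at least
  `‖qₙ₋₁α‖ ≥ 2r`, so nothing is removed and the measure is `2r`.
* If `k > qₙ`, then `{τ = k} ⊆ T^{-k} B \ T^{-(k - qₙ)} B`, the difference of two balls of equal
  radius whose centres are `‖qₙα‖` apart; it has measure at most `‖qₙα‖`
  (`volume_ball_diff_ball_le`).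

The best approximation property comes from the determinant identity for consecutive convergents,
which makes `(pₙ₋₁, qₙ₋₁), (pₙ, qₙ)` a basis of `ℤ²`, together with the alternating signs of the
errors `qₙα - pₙ`.
-/


open Filter MeasureTheory Metric Topology ENNReal

/-! ### Continued fraction convergents -/

lemma cf_not_terminatedAt {α : ℝ} (hα : Irrational α) (n : ℕ) :
    ¬ (GenContFract.of α).TerminatedAt n := by
  intro h
  obtain ⟨q, hq⟩ := (GenContFract.terminates_iff_rat α).1 ⟨n, h⟩
  exact hα ⟨q, hq.symm⟩

lemma cf_contsAux_int {α : ℝ} (hα : Irrational α) (n : ℕ) :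
    (∃ a b : ℤ, (GenContFract.of α).contsAux n = ⟨(a : ℝ), (b : ℝ)⟩) ∧
      ∃ a b : ℤ, (GenContFract.of α).contsAux (n + 1) = ⟨(a : ℝ), (b : ℝ)⟩ := by
  induction n with
  | zero =>
    refine ⟨⟨1, 0, ?_⟩, ⟨⌊α⌋, 1, ?_⟩⟩ <;> simp [GenContFract.contsAux]
  | succ n ih =>
    refine ⟨ih.2, ?_⟩
    obtain ⟨⟨a, b, h0⟩, c, d, h1⟩ := ih
    obtain ⟨gp, hgp⟩ := Option.ne_none_iff_exists'.1 (cf_not_terminatedAt hα n)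
    obtain ⟨ha, z, hz⟩ := GenContFract.of_partNum_eq_one_and_exists_int_partDen_eq hgp
    refine ⟨z * c + a, z * d + b, ?_⟩
    rw [GenContFract.contsAux_recurrence hgp h0 h1, ha, hz]
    push_cast
    simp

lemma cf_nums_dens_int {α : ℝ} (hα : Irrational α) (n : ℕ) :
    ∃ p q : ℤ, (GenContFract.of α).nums n = p ∧ cfDen α n = q := by
  obtain ⟨p, q, h⟩ := (cf_contsAux_int hα n).2
  refine ⟨p, q, ?_, ?_⟩
  · rw [GenContFract.num_eq_conts_a, GenContFract.nth_cont_eq_succ_nth_contAux, h]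
  · rw [cfDen, GenContFract.den_eq_conts_b, GenContFract.nth_cont_eq_succ_nth_contAux, h]

lemma one_le_cfDen_s7 (α : ℝ) (n : ℕ) : 1 ≤ cfDen α n := by
  induction n with
  | zero => simp [cfDen]
  | succ n ih => exact ih.trans GenContFract.of_den_mono

/-- The errors `qₙα - pₙ` alternate in sign, starting with a nonnegative one. -/
lemma cf_error_sign {α : ℝ} (hα : Irrational α) (n : ℕ) :
    0 ≤ (-1) ^ n * (cfDen α n * α - (GenContFract.of α).nums n) := by
  obtain ⟨ifp, hifp⟩ : ∃ ifp, GenContFract.IntFractPair.stream α n = some ifp := by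
    cases n with
    | zero => exact ⟨_, rfl⟩
    | succ m =>
      refine Option.ne_none_iff_exists'.1 fun h => cf_not_terminatedAt hα m ?_
      exact GenContFract.of_terminatedAt_n_iff_succ_nth_intFractPair_stream_eq_none.2 h
  have hq : 0 < cfDen α n := one_pos.trans_le (one_le_cfDen_s7 α n)
  have hs := GenContFract.sub_convs_eq hifp
  have hfr := GenContFract.IntFractPair.nth_stream_fr_nonneg hifp
  have hB : 0 ≤ ((GenContFract.of α).contsAux (n + 1)).b := GenContFract.zero_le_of_contsAux_b
  have hpB : 0 ≤ ((GenContFract.of α).contsAux n).b := GenContFract.zero_le_of_contsAux_b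
  have h1 : 0 ≤ (-1) ^ n * (α - (GenContFract.of α).convs n) := by
    simp only at hs
    rw [hs]
    split_ifs
    · simp
    · rw [mul_div_assoc', ← mul_pow]
      norm_num
      positivity
  have h2 : cfDen α n * α - (GenContFract.of α).nums n
      = cfDen α n * (α - (GenContFract.of α).convs n) := by
    have : (GenContFract.of α).convs n = (GenContFract.of α).nums n / cfDen α n := rfl
    rw [this]
    field_simp
  rw [h2, mul_left_comm]
  positivity

lemma cf_det {α : ℝ} (hα : Irrational α) (n : ℕ) :
    (GenContFract.of α).nums n * cfDen α (n + 1) - cfDen α n * (GenContFract.of α).nums (n + 1)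
      = (-1) ^ (n + 1) :=
  SimpContFract.determinant (s := SimpContFract.of α) (cf_not_terminatedAt hα n)

lemma intDist_eq_norm (x : ℝ) : intDist x = ‖(x : AddCircle (1 : ℝ))‖ :=
  UnitAddCircle.norm_eq.symm

/-- Best approximation property: among positive integers `m < qₙ₊₁`, the distance `‖mα‖` is at
least `‖qₙα‖`. -/
lemma le_norm_nsmul_of_lt_cfDen {α : ℝ} (hα : Irrational α) (n m : ℕ) (hm : 1 ≤ m)
    (hmq : (m : ℝ) < cfDen α (n + 1)) :
    intDist (cfDen α n * α) ≤ ‖m • (α : AddCircle (1 : ℝ))‖ := by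
  obtain ⟨p₀, q₀, hp₀, hq₀⟩ := cf_nums_dens_int hα n
  obtain ⟨p₁, q₁, hp₁, hq₁⟩ := cf_nums_dens_int hα (n + 1)
  have hdet := cf_det hα n
  have hs₀ := cf_error_sign hα n
  have hs₁ := cf_error_sign hα (n + 1)
  have hone₀ := one_le_cfDen_s7 α n
  rw [← AddCircle.coe_nsmul, ← intDist_eq_norm, nsmul_eq_mul]
  simp only [hp₀, hq₀, hp₁, hq₁] at *
  have hdet' : p₀ * q₁ - q₀ * p₁ = (-1) ^ (n + 1) := by exact_mod_cast hdet
  have hmq' : (m : ℤ) < q₁ := by exact_mod_cast hmq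
  have hq₀' : 1 ≤ q₀ := by exact_mod_cast hone₀
  have hm' : (1 : ℤ) ≤ m := by exact_mod_cast hm
  set p : ℤ := round ((m : ℝ) * α) with hp
  have hu : ((-1) ^ (n + 1) * (-1) ^ (n + 1) : ℤ) = 1 := by rw [← mul_pow]; norm_num
  -- Cramer's rule gives the coordinates of `(p, m)` in the basis of consecutive convergents.
  obtain ⟨x, y, hxm, hxp⟩ : ∃ x y : ℤ, (m : ℤ) = x * q₀ + y * q₁ ∧ p = x * p₀ + y * p₁ := by
    refine ⟨(-1) ^ (n + 1) * (p * q₁ - m * p₁), (-1) ^ (n + 1) * (p₀ * m - q₀ * p), ?_, ?_⟩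
    · linear_combination (-(m : ℤ)) * hu - (-1) ^ (n + 1) * m * hdet'
    · linear_combination (-p) * hu - (-1) ^ (n + 1) * p * hdet'
  have hx : x ≠ 0 := by
    rintro rfl
    rcases le_or_gt y 0 with hy | hy <;> nlinarith
  have hxy : x * y ≤ 0 := by
    by_contra! h
    rcases pos_and_pos_or_neg_and_neg_of_mul_pos h with ⟨h1, h2⟩ | ⟨h1, h2⟩ <;> nlinarith
  set e₀ : ℝ := q₀ * α - p₀ with he₀
  set e₁ : ℝ := q₁ * α - p₁ with he₁
  have hee : e₀ * e₁ ≤ 0 := by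
    rcases neg_one_pow_eq_or ℝ n with h | h <;> simp only [pow_succ, h] at hs₀ hs₁ <;> nlinarith
  have hsplit : (m : ℝ) * α - p = x * e₀ + y * e₁ := by
    have h1 : (m : ℝ) = x * q₀ + y * q₁ := by exact_mod_cast hxm
    rw [h1, hxp, he₀, he₁]
    push_cast
    ring
  have hxy' : (x : ℝ) * y ≤ 0 := by exact_mod_cast hxy
  have hcross : 0 ≤ (x * e₀) * (y * e₁) := by
    have := mul_nonneg_of_nonpos_of_nonpos hxy' hee
    linarith
  have hx1 : (1 : ℝ) ≤ |(x : ℝ)| := by exact_mod_cast Int.one_le_abs hx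
  calc intDist (q₀ * α) ≤ |e₀| := round_le _ _
    _ ≤ |(x : ℝ)| * |e₀| := le_mul_of_one_le_left (abs_nonneg _) hx1
    _ = |x * e₀| := (abs_mul _ _).symm
    _ ≤ |x * e₀ + y * e₁| := by
        refine sq_le_sq.1 ?_
        nlinarith [sq_nonneg (y * e₁)]
    _ = intDist (m * α) := by rw [← hsplit]; rfl

/-! ### Balls on the circle and hitting times -/

lemma volume_ball_circle (c : AddCircle (1 : ℝ)) {r : ℝ} (hr : 2 * r ≤ 1) :
    volume (ball c r) = ENNReal.ofReal (2 * r) := by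
  rw [← measure_congr (AddCircle.closedBall_ae_eq_ball (x := c) (ε := r)),
    AddCircle.volume_closedBall, min_eq_right hr]

/-- The difference of two balls of equal radius lies in a closed ball whose diameter is the distance
between the two centres. -/
lemma volume_ball_diff_ball_le (c d : AddCircle (1 : ℝ)) (r : ℝ) :
    volume (ball c r \ ball d r) ≤ ENNReal.ofReal ‖d - c‖ := by
  obtain ⟨s, hs, hsn⟩ : ∃ s : ℝ, (s : AddCircle (1 : ℝ)) = d - c ∧ ‖d - c‖ = |s| := by
    obtain ⟨t, ht⟩ := QuotientAddGroup.mk_surjective (d - c)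
    have ht' : (t : AddCircle (1 : ℝ)) = d - c := ht
    refine ⟨t - round t, ?_, ?_⟩
    · have : ((round t : ℝ) : AddCircle (1 : ℝ)) = 0 := by
        rw [AddCircle.coe_eq_zero_iff]
        exact ⟨round t, by simp⟩
      rw [AddCircle.coe_sub, this, sub_zero, ht']
    · rw [← ht', UnitAddCircle.norm_eq]
  -- The part of `(-r, r)` outside `(s - r, s + r)` lies within `|s| / 2` of this point.
  obtain ⟨w, hw⟩ : ∃ w : ℝ, ∀ t : ℝ, |t| < r → r ≤ |t - s| → |t - w| ≤ |s| / 2 := by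
    rcases le_total 0 s with h | h
    · refine ⟨s / 2 - r, fun t h1 h2 => ?_⟩
      rw [abs_lt] at h1
      rw [abs_of_nonneg h, abs_le]
      rcases le_abs'.1 h2 with h3 | h3 <;> constructor <;> linarith
    · refine ⟨s / 2 + r, fun t h1 h2 => ?_⟩
      rw [abs_lt] at h1
      rw [abs_of_nonpos h, abs_le]
      rcases le_abs'.1 h2 with h3 | h3 <;> constructor <;> linarith
  have hle : ∀ t : ℝ, ‖(t : AddCircle (1 : ℝ))‖ ≤ |t| := fun t => by
    rw [UnitAddCircle.norm_eq]
    simpa using round_le t 0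
  have hsub : ball c r \ ball d r ⊆ closedBall (c + (w : AddCircle (1 : ℝ))) (|s| / 2) := by
    rintro y ⟨h1, h2⟩
    rw [mem_ball, dist_eq_norm] at h1 h2
    obtain ⟨t₀, ht₀⟩ := QuotientAddGroup.mk_surjective (y - c)
    have ht₀' : (t₀ : AddCircle (1 : ℝ)) = y - c := ht₀
    obtain ⟨t, ht, htn⟩ : ∃ t : ℝ, (t : AddCircle (1 : ℝ)) = y - c ∧ |t| < r := by
      refine ⟨t₀ - round t₀, ?_, ?_⟩
      · have : ((round t₀ : ℝ) : AddCircle (1 : ℝ)) = 0 := by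
          rw [AddCircle.coe_eq_zero_iff]
          exact ⟨round t₀, by simp⟩
        rw [AddCircle.coe_sub, this, sub_zero, ht₀']
      · rwa [← UnitAddCircle.norm_eq, ht₀']
    have hts : y - d = ((t - s : ℝ) : AddCircle (1 : ℝ)) := by
      rw [AddCircle.coe_sub, ht, hs]
      abel
    have h3 : r ≤ |t - s| := by
      rw [hts, not_lt] at h2
      exact h2.trans (hle _)
    have hyw : y - (c + (w : AddCircle (1 : ℝ))) = ((t - w : ℝ) : AddCircle (1 : ℝ)) := by
      rw [AddCircle.coe_sub, ht]
      abel
    rw [mem_closedBall, dist_eq_norm, hyw]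
    exact (hle _).trans (hw t htn h3)
  calc volume (ball c r \ ball d r)
      ≤ volume (closedBall (c + (w : AddCircle (1 : ℝ))) (|s| / 2)) := measure_mono hsub
    _ ≤ ENNReal.ofReal ‖d - c‖ := by
        rw [AddCircle.volume_closedBall, hsn]
        exact ENNReal.ofReal_le_ofReal ((min_le_right _ _).trans (by linarith))

lemma hitTime_eq_iff {X : Type*} [PseudoMetricSpace X] (T : X → X) (x x₀ : X) (r : ℝ) (k : ℕ) :
    hitTime T x x₀ r = (k : ℕ∞) ↔
      (1 ≤ k ∧ T^[k] x ∈ ball x₀ r) ∧ ∀ j, 1 ≤ j → j < k → T^[j] x ∉ ball x₀ r := by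
  constructor
  · intro h
    have hne : {N : ℕ∞ | ∃ n : ℕ, N = n ∧ 1 ≤ n ∧ T^[n] x ∈ ball x₀ r}.Nonempty := by
      rw [Set.nonempty_iff_ne_empty]
      intro he
      rw [hitTime, he, sInf_empty] at h
      exact ENat.top_ne_natCast k h
    have hmem := csInf_mem hne
    change hitTime T x x₀ r ∈ _ at hmem
    rw [h] at hmem
    obtain ⟨n, hkn, hn⟩ := hmem
    obtain rfl : k = n := by exact_mod_cast hkn
    refine ⟨hn, fun j hj hjk hjb => ?_⟩
    have : hitTime T x x₀ r ≤ (j : ℕ∞) := sInf_le ⟨j, rfl, hj, hjb⟩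
    rw [h] at this
    exact absurd (by exact_mod_cast this) (not_le.2 hjk)
  · rintro ⟨hk, hmin⟩
    refine IsLeast.csInf_eq ⟨⟨k, rfl, hk⟩, ?_⟩
    rintro _ ⟨j, rfl, hj, hjb⟩
    by_contra! h
    exact hmin j hj (by exact_mod_cast h) hjb

lemma iterate_rotation_mem_ball (a x : AddCircle (1 : ℝ)) (r : ℝ) (j : ℕ) :
    (fun y => y + a)^[j] x ∈ ball 0 r ↔ x ∈ ball (-(j • a)) r := by
  rw [add_right_iterate_apply, mem_ball, mem_ball, dist_eq_norm, dist_eq_norm, sub_zero,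
    sub_neg_eq_add]

/-! ### The distribution of the hitting time -/

/-- For an irrational rotation, if `‖qₙα‖ < 2r ≤ ‖qₙ₋₁α‖` then the set of points whose hitting
time into `B(0,r)` equals `k` has measure `2r` for `1 ≤ k ≤ qₙ`, and measure at most `‖qₙα‖`
for `k > qₙ`. -/
theorem stmt_7 (α : ℝ) (hα : Irrational α) (r : ℝ) (hr : 0 < r) (n : ℕ) (hn : 1 ≤ n)
    (h1 : intDist (cfDen α n * α) < 2 * r) (h2 : 2 * r ≤ intDist (cfDen α (n-1) * α)) :
    (∀ k : ℕ, 1 ≤ k → (k : ℝ) ≤ cfDen α n →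
      volume {x : AddCircle (1:ℝ) |
          hitTime (fun y => y + (α : AddCircle (1:ℝ))) x 0 r = (k : ℕ∞)}
        = ENNReal.ofReal (2 * r)) ∧
    (∀ k : ℕ, cfDen α n < (k : ℝ) →
      volume {x : AddCircle (1:ℝ) |
          hitTime (fun y => y + (α : AddCircle (1:ℝ))) x 0 r = (k : ℕ∞)}
        ≤ ENNReal.ofReal (intDist (cfDen α n * α))) := by
  obtain ⟨m, rfl⟩ : ∃ m, n = m + 1 := ⟨n - 1, by omega⟩
  rw [Nat.add_sub_cancel] at h2
  have hhalf : 2 * r ≤ 1 := by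
    have : intDist (cfDen α m * α) ≤ 1 / 2 := abs_sub_round _
    linarith
  constructor
  · intro k hk hkq
    have hset : {x : AddCircle (1:ℝ) |
        hitTime (fun y => y + (α : AddCircle (1:ℝ))) x 0 r = (k : ℕ∞)}
          = ball (-(k • (α : AddCircle (1:ℝ)))) r := by
      ext x
      rw [Set.mem_ofPred_eq, hitTime_eq_iff]
      simp only [iterate_rotation_mem_ball]
      refine ⟨fun h => h.1.2, fun h => ⟨⟨hk, h⟩, fun j hj hjk hjx => ?_⟩⟩
      have hlt : ((k - j : ℕ) : ℝ) < cfDen α (m + 1) := by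
        refine lt_of_lt_of_le ?_ hkq
        exact_mod_cast (by omega : k - j < k)
      have hdist := le_norm_nsmul_of_lt_cfDen hα m (k - j) (by omega) hlt
      have hkj : (k - j) • (α : AddCircle (1:ℝ))
          = -(j • (α : AddCircle (1:ℝ))) - -(k • (α : AddCircle (1:ℝ))) := by
        rw [sub_nsmul _ hjk.le]
        abel
      rw [hkj, ← dist_eq_norm] at hdist
      exact Set.disjoint_left.1 (ball_disjoint_ball (by linarith)) hjx h
    rw [hset, volume_ball_circle _ hhalf]
  · intro k hk
    obtain ⟨-, q, -, hq⟩ := cf_nums_dens_int hα (m + 1)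
    have hq1 := one_le_cfDen_s7 α (m + 1)
    rw [hq] at hq1 hk ⊢
    have hq1' : 1 ≤ q := by exact_mod_cast hq1
    lift q to ℕ using by omega
    have hqk : q < k := by exact_mod_cast hk
    have hsub : {x : AddCircle (1:ℝ) |
        hitTime (fun y => y + (α : AddCircle (1:ℝ))) x 0 r = (k : ℕ∞)}
          ⊆ ball (-(k • (α : AddCircle (1:ℝ)))) r
            \ ball (-((k - q) • (α : AddCircle (1:ℝ)))) r := by
      intro x hx
      rw [Set.mem_ofPred_eq, hitTime_eq_iff] at hx
      simp only [iterate_rotation_mem_ball] at hx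
      exact ⟨hx.1.2, hx.2 (k - q) (by omega) (by omega)⟩
    refine (measure_mono hsub).trans ((volume_ball_diff_ball_le _ _ _).trans_eq ?_)
    have hkq : -((k - q) • (α : AddCircle (1:ℝ))) - -(k • (α : AddCircle (1:ℝ)))
        = q • (α : AddCircle (1:ℝ)) := by
      rw [sub_nsmul _ hqk.le]
      abel
    rw [hkq, ← AddCircle.coe_nsmul, intDist_eq_norm, nsmul_eq_mul, Int.cast_natCast]
end

section
/- Let T : X → X be a map on a metric space (X, dist) and define d_n(x,y) = min_{1 ≤ i ≤ n} dist(Tⁱ(x), y). Then for all x, x₀ ∈ X: R̲(x,x₀) = (limsup_{n→∞} (−log d_n(x,x₀))/log n)^{−1} and R̄(x,x₀) = (liminf_{n→∞} (−log d_n(x,x₀))/log n)^{−1}, with the conventions 1/0 = ∞ and 1/∞ = 0. -/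
/-! The two quantities are inverse to each other because `τ_r ≤ n ↔ dₙ < r` (`hitTime_le_iff`):
up to taking logarithms, `r ↦ τ_r` and `n ↦ dₙ` are generalized inverses. Writing
`H r = log τ_r / (-log r)` and `D n = -log dₙ / log n`, this is used for a real `c > 0` along the
matching scales `r = n ^ (-1/c)` and `n = ⌈r ^ (-c)⌉`:

* `c < liminf H` implies `limsup D ≤ 1/c` (`limsup_logRate_le`), and `limsup D < 1/c` implies
  `c ≤ liminf H` (`le_Rlower`);
* `limsup H < c` implies `1/c ≤ liminf D` (`le_liminf_logRate`), and `1/c < liminf D` implies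
  `limsup H ≤ c` (`Rupper_le`).

All four quantities are nonnegative, and for nonnegative extended reals comparing with every real
`c > 0` in this way determines the inverse, including the values `0` and `∞`
(`eq_einv_of_forall`). -/

open Filter MeasureTheory Metric Topology ENNReal

/-- `dₙ(x,y) = min_{1 ≤ i ≤ n} dist(Tⁱ(x), y)`, the minimal distance of the first `n` iterates
of `x` to the target `y`. -/
noncomputable def dmin {X : Type*} [PseudoMetricSpace X] (T : X → X) (x y : X) (n : ℕ) : ℝ :=
  sInf ((fun i : ℕ => dist (T^[i] x) y) '' {i : ℕ | 1 ≤ i ∧ i ≤ n})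

/-- The natural logarithm extended to take the value `-∞` on nonpositive reals. -/
noncomputable def relog (x : ℝ) : EReal := if x ≤ 0 then ⊥ else ((Real.log x : ℝ) : EReal)

/-- Inverse on extended reals with the conventions `1/0 = ∞` and `1/±∞ = 0`. -/
noncomputable def einv (x : EReal) : EReal := if x = 0 then ⊤ else x⁻¹

/-- The logarithmic rate `-log dₙ / log n` at which the orbit of `x` approaches `x₀`. -/
noncomputable def logRate {X : Type*} [PseudoMetricSpace X] (T : X → X) (x x₀ : X) (n : ℕ) :
    EReal :=
  (-(relog (dmin T x x₀ n))) * (((Real.log n)⁻¹ : ℝ) : EReal)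

/-! ### Inverses in the extended reals -/

/-- The two implications form, up to boundary cases, the equivalence `c < A ↔ B < 1/c`. -/
theorem eq_einv_of_forall {A B : EReal} (hA : 0 ≤ A) (hB : 0 ≤ B)
    (h1 : ∀ c : ℝ, 0 < c → (c : EReal) < A → B ≤ ((c⁻¹ : ℝ) : EReal))
    (h2 : ∀ c : ℝ, 0 < c → B < ((c⁻¹ : ℝ) : EReal) → (c : EReal) ≤ A) : A = einv B := by
  have key : ∀ c : ℝ, 0 < c →
      (B < ((c⁻¹ : ℝ) : EReal) → (c : EReal) ≤ einv B) ∧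
      ((c : EReal) < einv B → B < ((c⁻¹ : ℝ) : EReal)) := by
    intro c hc
    have hc' : (0 : EReal) < ((c⁻¹ : ℝ) : EReal) := by exact_mod_cast inv_pos.2 hc
    by_cases h0 : B = 0
    · subst h0
      simp only [einv, if_true]
      exact ⟨fun _ => le_top, fun _ => hc'⟩
    · simp only [einv, if_neg h0]
      induction B with
      | bot => simp at hB
      | top =>
        refine ⟨fun h => absurd h (by simp), fun h => ?_⟩
        rw [EReal.inv_top] at h
        exact absurd hc (not_lt.2 (by exact_mod_cast h.le))
      | coe b =>
        have hb : 0 < b := lt_of_le_of_ne (by exact_mod_cast hB) (by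
          intro h; exact h0 (by rw [← h]; rfl))
        rw [← EReal.coe_inv]
        simp only [EReal.coe_lt_coe_iff, EReal.coe_le_coe_iff]
        refine ⟨fun h => ?_, fun h => ?_⟩
        · exact ((lt_inv_comm₀ hb hc).1 h).le
        · exact (lt_inv_comm₀ hc hb).1 h
  have hE : 0 ≤ einv B := by
    unfold einv
    split_ifs
    · exact le_top
    · exact EReal.inv_nonneg_of_nonneg hB
  apply le_antisymm
  · by_contra! h
    obtain ⟨c, hc1, hc2⟩ := EReal.lt_iff_exists_real_btwn.1 h
    obtain ⟨c', hc3, hc4⟩ := EReal.lt_iff_exists_real_btwn.1 hc2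
    have hc : 0 < c := by exact_mod_cast hE.trans_lt hc1
    have hcc : c < c' := by exact_mod_cast hc3
    have hB' : B < ((c⁻¹ : ℝ) : EReal) :=
      (h1 c' (hc.trans hcc) hc4).trans_lt (by
        exact_mod_cast inv_strictAnti₀ hc hcc)
    exact absurd ((key c hc).1 hB') (not_le.2 hc1)
  · by_contra! h
    obtain ⟨c, hc1, hc2⟩ := EReal.lt_iff_exists_real_btwn.1 h
    have hc : 0 < c := by exact_mod_cast hA.trans_lt hc1
    exact absurd (h2 c hc ((key c hc).2 hc2)) (not_le.2 hc1)

section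

variable {X : Type*} [PseudoMetricSpace X] (T : X → X) (x x₀ : X)

/-! ### Hitting times and minimal distances -/

theorem dmin_lt_iff {n : ℕ} (hn : 1 ≤ n) (r : ℝ) :
    dmin T x x₀ n < r ↔ ∃ i, 1 ≤ i ∧ i ≤ n ∧ dist (T^[i] x) x₀ < r := by
  have hb : BddBelow ((fun i : ℕ => dist (T^[i] x) x₀) '' {i : ℕ | 1 ≤ i ∧ i ≤ n}) :=
    ⟨0, by rintro _ ⟨i, -, rfl⟩; exact dist_nonneg⟩
  have hne : ((fun i : ℕ => dist (T^[i] x) x₀) '' {i : ℕ | 1 ≤ i ∧ i ≤ n}).Nonempty :=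
    ⟨_, 1, ⟨le_rfl, hn⟩, rfl⟩
  unfold dmin
  rw [csInf_lt_iff hb hne]
  simp [and_assoc]

theorem dmin_antitone {m n : ℕ} (hm : 1 ≤ m) (hmn : m ≤ n) :
    dmin T x x₀ n ≤ dmin T x x₀ m := by
  by_contra! h
  obtain ⟨i, h1, h2, h3⟩ := (dmin_lt_iff T x x₀ hm _).1 h
  exact lt_irrefl _ ((dmin_lt_iff T x x₀ (hm.trans hmn) _).2 ⟨i, h1, h2.trans hmn, h3⟩)

/-- The infimum defining `hitTime` is attained as soon as it is finite. -/
theorem hitTime_eq_top_or (r : ℝ) : hitTime T x x₀ r = ⊤ ∨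
    ∃ n : ℕ, hitTime T x x₀ r = n ∧ 1 ≤ n ∧ dist (T^[n] x) x₀ < r := by
  unfold hitTime
  by_cases h : {N : ℕ∞ | ∃ n : ℕ, N = n ∧ 1 ≤ n ∧ T^[n] x ∈ Metric.ball x₀ r}.Nonempty
  · right
    obtain ⟨n, h1, h2, h3⟩ := csInf_mem h
    exact ⟨n, h1, h2, h3⟩
  · left
    rw [Set.not_nonempty_iff_eq_empty.1 h, sInf_empty]

theorem hitTime_le_iff {n : ℕ} (hn : 1 ≤ n) (r : ℝ) :
    hitTime T x x₀ r ≤ n ↔ dmin T x x₀ n < r := by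
  rw [dmin_lt_iff T x x₀ hn]
  constructor
  · intro h
    rcases hitTime_eq_top_or T x x₀ r with h' | ⟨m, hm, h1, h2⟩
    · rw [h'] at h; simp at h
    · rw [hm] at h
      exact ⟨m, h1, by exact_mod_cast h, h2⟩
  · rintro ⟨i, h1, h2, h3⟩
    refine le_trans (sInf_le ⟨i, rfl, h1, h3⟩) (by exact_mod_cast h2)

theorem log_natCast {n : ℕ} (hn : 1 ≤ n) :
    ENNReal.log (((n : ℕ∞)) : ℝ≥0∞) = ((Real.log n : ℝ) : EReal) := by
  have h : (((n : ℕ∞)) : ℝ≥0∞) = ENNReal.ofReal n := by simp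
  rw [h, ENNReal.log_ofReal_of_pos (by exact_mod_cast hn)]

theorem hitRatio_le {n : ℕ} (hn : 1 ≤ n) {r : ℝ} (h0 : 0 < r) (h1 : r < 1)
    (h : dmin T x x₀ n < r) : hitRatio T x x₀ r ≤ ((Real.log n / (-Real.log r) : ℝ) : EReal) := by
  have hL : 0 < -Real.log r := neg_pos.2 (Real.log_neg h0 h1)
  rw [EReal.coe_div, ← log_natCast hn]
  unfold hitRatio
  apply EReal.div_le_div_right_of_nonneg (by exact_mod_cast hL.le)
  apply ENNReal.log_monotone
  exact_mod_cast (hitTime_le_iff T x x₀ hn r).2 h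

theorem exists_of_hitRatio_lt {c r : ℝ} (h0 : 0 < r) (h1 : r < 1)
    (h : hitRatio T x x₀ r < c) :
    ∃ n : ℕ, 1 ≤ n ∧ dmin T x x₀ n < r ∧ Real.log n < c * (-Real.log r) := by
  have hL : 0 < -Real.log r := neg_pos.2 (Real.log_neg h0 h1)
  unfold hitRatio at h
  rcases hitTime_eq_top_or T x x₀ r with h' | ⟨n, hn, hn1, h2⟩
  · rw [h'] at h
    simp only [ENat.toENNReal_top, ENNReal.log_top] at h
    rw [EReal.top_div_of_pos_ne_top (by exact_mod_cast hL) (EReal.coe_ne_top _)] at h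
    exact absurd h (by simp)
  · refine ⟨n, hn1, (hitTime_le_iff T x x₀ hn1 r).1 hn.le, ?_⟩
    rw [hn, log_natCast hn1, ← EReal.coe_div, EReal.coe_lt_coe_iff, div_lt_iff₀ hL] at h
    exact h

theorem hitRatio_nonneg {r : ℝ} (h0 : 0 < r) (h1 : r < 1) : 0 ≤ hitRatio T x x₀ r := by
  by_contra! h
  obtain ⟨n, hn, -, h3⟩ := exists_of_hitRatio_lt T x x₀ (c := 0) h0 h1 (by exact_mod_cast h)
  have := Real.log_nonneg (show (1 : ℝ) ≤ n by exact_mod_cast hn)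
  linarith

theorem logRate_le_iff {n : ℕ} (hn : 2 ≤ n) (a : ℝ) :
    logRate T x x₀ n ≤ a ↔ Real.exp (-(a * Real.log n)) ≤ dmin T x x₀ n := by
  have hl : 0 < Real.log n := Real.log_pos (by exact_mod_cast hn)
  unfold logRate relog
  split_ifs with h
  · rw [EReal.neg_bot, EReal.top_mul_coe_of_pos (inv_pos.2 hl)]
    have := Real.exp_pos (-(a * Real.log n))
    simp only [top_le_iff, EReal.coe_ne_top, false_iff, not_le]
    linarith
  · push Not at h
    rw [← EReal.coe_neg, ← EReal.coe_mul, EReal.coe_le_coe_iff, ← Real.le_log_iff_exp_le h,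
      ← div_eq_mul_inv, div_le_iff₀ hl, neg_le]

theorem le_logRate_iff {n : ℕ} (hn : 2 ≤ n) (a : ℝ) :
    a ≤ logRate T x x₀ n ↔ dmin T x x₀ n ≤ Real.exp (-(a * Real.log n)) := by
  have hl : 0 < Real.log n := Real.log_pos (by exact_mod_cast hn)
  unfold logRate relog
  split_ifs with h
  · rw [EReal.neg_bot, EReal.top_mul_coe_of_pos (inv_pos.2 hl)]
    exact iff_of_true le_top (h.trans (Real.exp_pos _).le)
  · push Not at h
    rw [← EReal.coe_neg, ← EReal.coe_mul, EReal.coe_le_coe_iff, ← Real.log_le_iff_le_exp h,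
      ← div_eq_mul_inv, le_div_iff₀ hl, le_neg]

/-! ### Nonnegativity of the indicators and rates -/

theorem eventually_mem_Ioo {s : ℝ} (hs : 0 < s) : ∀ᶠ r in 𝓝[>] (0 : ℝ), 0 < r ∧ r < s :=
  Ioo_mem_nhdsGT hs

theorem Rlower_nonneg : 0 ≤ Rlower T x x₀ :=
  le_liminf_of_le (by isBoundedDefault)
    ((eventually_mem_Ioo one_pos).mono fun _ h => hitRatio_nonneg T x x₀ h.1 h.2)

theorem Rupper_nonneg : 0 ≤ Rupper T x x₀ :=
  (Rlower_nonneg T x x₀).trans liminf_le_limsup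

theorem tendsto_log_natCast : Tendsto (fun n : ℕ => Real.log n) atTop atTop :=
  Real.tendsto_log_atTop.comp tendsto_natCast_atTop_atTop

/-- Since `dₙ ≤ d₁`, the numerator `-log dₙ` is bounded below while `log n → ∞`. -/
theorem liminf_logRate_nonneg : 0 ≤ liminf (logRate T x x₀) atTop := by
  by_contra! h
  obtain ⟨c, hc1, hc2⟩ := EReal.lt_iff_exists_real_btwn.1 h
  have hc : c < 0 := by exact_mod_cast hc2
  refine absurd hc1 (not_lt.2 (le_liminf_of_le (by isBoundedDefault) ?_))
  have ht : Tendsto (fun n : ℕ => Real.exp (-(c * Real.log n))) atTop atTop := by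
    apply Real.tendsto_exp_atTop.comp
    simp only [← neg_mul]
    exact tendsto_log_natCast.const_mul_atTop (neg_pos.2 hc)
  filter_upwards [ht.eventually_ge_atTop (dmin T x x₀ 1), eventually_ge_atTop 2] with n h1 h2
  exact (le_logRate_iff T x x₀ h2 c).2 ((dmin_antitone T x x₀ le_rfl (by omega)).trans h1)

theorem limsup_logRate_nonneg : 0 ≤ limsup (logRate T x x₀) atTop :=
  (liminf_logRate_nonneg T x x₀).trans liminf_le_limsup

/-! ### Comparison of the two rates -/

/-- The scale `r = n ^ (-1/c)` tends to `0` from the right. -/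
theorem tendsto_scale {c : ℝ} (hc : 0 < c) :
    Tendsto (fun n : ℕ => Real.exp (-(c⁻¹ * Real.log n))) atTop (𝓝[>] 0) := by
  refine tendsto_nhdsWithin_iff.2 ⟨?_, Eventually.of_forall fun n => Real.exp_pos _⟩
  exact Real.tendsto_exp_neg_atTop_nhds_zero.comp
    (tendsto_log_natCast.const_mul_atTop (inv_pos.2 hc))

theorem limsup_logRate_le {c : ℝ} (hc : 0 < c) (h : (c : EReal) < Rlower T x x₀) :
    limsup (logRate T x x₀) atTop ≤ ((c⁻¹ : ℝ) : EReal) := by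
  have h' := eventually_lt_of_lt_liminf h
  refine limsup_le_of_le (by isBoundedDefault) ?_
  filter_upwards [(tendsto_scale hc).eventually h',
    (tendsto_scale hc).eventually (eventually_mem_Ioo one_pos), eventually_ge_atTop 2]
    with n h1 h2 hn
  have hl : 0 < Real.log n := Real.log_pos (by exact_mod_cast hn)
  rw [logRate_le_iff T x x₀ hn]
  by_contra! hlt
  have hle := hitRatio_le T x x₀ (by omega) h2.1 h2.2 hlt
  have hq : Real.log n / (-Real.log (Real.exp (-(c⁻¹ * Real.log n)))) = c := by
    rw [Real.log_exp]; field_simp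
  rw [hq] at hle
  exact absurd h1 (not_lt.2 hle)

theorem le_Rlower_s16 {c : ℝ} (hc : 0 < c)
    (h : limsup (logRate T x x₀) atTop < ((c⁻¹ : ℝ) : EReal)) : (c : EReal) ≤ Rlower T x x₀ := by
  obtain ⟨n₀, hn₀⟩ := eventually_atTop.1 (eventually_lt_of_limsup_lt h)
  have hD : ∀ n, max n₀ 2 ≤ n → Real.exp (-(c⁻¹ * Real.log n)) < dmin T x x₀ n := by
    intro n hn
    have h2 := hn₀ n (by omega)
    rwa [← not_le, le_logRate_iff T x x₀ (by omega), not_le] at h2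
  have hpos : 0 < dmin T x x₀ (max n₀ 2) := (Real.exp_pos _).trans (hD _ le_rfl)
  refine le_liminf_of_le (by isBoundedDefault) ?_
  filter_upwards [eventually_mem_Ioo one_pos, eventually_mem_Ioo hpos] with r h1 h2
  by_contra! hlt
  obtain ⟨n, hn, hnr, hlog⟩ := exists_of_hitRatio_lt T x x₀ h1.1 h1.2 hlt
  -- As `r` is below the distance at the threshold, the hitting time lies beyond the threshold.
  have hbig : max n₀ 2 ≤ n := by
    by_contra! hlt'
    linarith [dmin_antitone T x x₀ hn hlt'.le]
  have h3 : -(c⁻¹ * Real.log n) < Real.log r :=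
    (Real.lt_log_iff_exp_lt h1.1).2 ((hD n hbig).trans hnr)
  have h4 : c * -(c⁻¹ * Real.log n) < c * Real.log r := mul_lt_mul_of_pos_left h3 hc
  have h5 : c * -(c⁻¹ * Real.log n) = -Real.log n := by field_simp
  linarith

theorem le_liminf_logRate {c : ℝ} (hc : 0 < c) (h : Rupper T x x₀ < c) :
    ((c⁻¹ : ℝ) : EReal) ≤ liminf (logRate T x x₀) atTop := by
  have h' := eventually_lt_of_limsup_lt h
  refine le_liminf_of_le (by isBoundedDefault) ?_
  filter_upwards [(tendsto_scale hc).eventually h',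
    (tendsto_scale hc).eventually (eventually_mem_Ioo one_pos), eventually_ge_atTop 2]
    with n h1 h2 hn
  obtain ⟨m, hm, hmr, hlog⟩ := exists_of_hitRatio_lt T x x₀ h2.1 h2.2 h1
  rw [Real.log_exp, neg_neg, mul_inv_cancel_left₀ hc.ne'] at hlog
  have hmn : m ≤ n := by
    have := (Real.log_lt_log_iff (by exact_mod_cast hm) (by positivity)).1 hlog
    exact_mod_cast this.le
  exact (le_logRate_iff T x x₀ hn _).2 ((dmin_antitone T x x₀ hm hmn).trans hmr.le)

/-- Rounding `r ^ (-c)` up to an integer costs a factor at most `2`, which adds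
`log 2 / (-log r) → 0` to the hitting ratio. -/
theorem Rupper_le {c : ℝ} (hc : 0 < c)
    (h : ((c⁻¹ : ℝ) : EReal) < liminf (logRate T x x₀) atTop) : Rupper T x x₀ ≤ c := by
  have hL : Tendsto (fun r : ℝ => -Real.log r) (𝓝[>] 0) atTop :=
    tendsto_neg_atBot_atTop.comp Real.tendsto_log_nhdsGT_zero
  have hE : Tendsto (fun r : ℝ => Real.exp (c * (-Real.log r))) (𝓝[>] 0) atTop :=
    Real.tendsto_exp_atTop.comp (hL.const_mul_atTop hc)
  have hN : Tendsto (fun r : ℝ => ⌈Real.exp (c * (-Real.log r))⌉₊) (𝓝[>] 0) atTop :=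
    tendsto_nat_ceil_atTop.comp hE
  have hlim : Tendsto (fun r : ℝ => ((c + Real.log 2 / (-Real.log r) : ℝ) : EReal)) (𝓝[>] 0)
      (𝓝 (c : EReal)) := by
    refine (continuous_coe_real_ereal.tendsto c).comp ?_
    simpa using (hL.const_div_atTop (Real.log 2)).const_add c
  refine le_trans (limsup_le_limsup ?_ (by isBoundedDefault) (by isBoundedDefault))
    hlim.limsup_eq.le
  filter_upwards [eventually_mem_Ioo one_pos, hN.eventually (eventually_lt_of_lt_liminf h),
    hN.eventually (eventually_ge_atTop 2)] with r h1 hD hn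
  set n := ⌈Real.exp (c * (-Real.log r))⌉₊ with hndef
  have hl : 0 < -Real.log r := neg_pos.2 (Real.log_neg h1.1 h1.2)
  have hn0 : (0 : ℝ) < n := by positivity
  rw [← not_le, logRate_le_iff T x x₀ hn, not_le] at hD
  have hlow : c * (-Real.log r) ≤ Real.log n := (Real.le_log_iff_exp_le hn0).2 (Nat.le_ceil _)
  have hr : Real.exp (-(c⁻¹ * Real.log n)) ≤ r := by
    rw [← Real.le_log_iff_exp_le h1.1, neg_le, inv_mul_eq_div, le_div_iff₀ hc, mul_comm]
    exact hlow
  refine (hitRatio_le T x x₀ (by omega) h1.1 h1.2 (hD.trans_le hr)).trans ?_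
  rw [EReal.coe_le_coe_iff, div_le_iff₀ hl, add_mul, div_mul_cancel₀ _ hl.ne']
  have hexp : 1 ≤ Real.exp (c * (-Real.log r)) := Real.one_le_exp (by positivity)
  have hup : (n : ℝ) ≤ 2 * Real.exp (c * (-Real.log r)) := by
    have := Nat.ceil_lt_add_one (Real.exp_pos (c * (-Real.log r))).le
    rw [← hndef] at this
    linarith
  have := Real.log_le_log hn0 hup
  rw [Real.log_mul two_ne_zero (Real.exp_pos _).ne', Real.log_exp] at this
  linarith

end

/-- **Hitting time indicators and logarithm laws.** For every map `T` of a metric space and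
all `x, x₀`: `R̲(x,x₀) = (limsup (-log dₙ)/log n)⁻¹` and `R̄(x,x₀) = (liminf (-log dₙ)/log n)⁻¹`,
with the conventions `1/0 = ∞`, `1/∞ = 0`. -/
theorem stmt_16 {X : Type*} [MetricSpace X] (T : X → X) (x x₀ : X) :
    Rlower T x x₀ =
      einv (limsup (fun n : ℕ =>
        (-(relog (dmin T x x₀ n))) * (((Real.log n)⁻¹ : ℝ) : EReal)) atTop) ∧
    Rupper T x x₀ =
      einv (liminf (fun n : ℕ =>
        (-(relog (dmin T x x₀ n))) * (((Real.log n)⁻¹ : ℝ) : EReal)) atTop) := by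
  refine ⟨eq_einv_of_forall (Rlower_nonneg T x x₀) (limsup_logRate_nonneg T x x₀)
    (fun c hc => limsup_logRate_le T x x₀ hc) (fun c hc => le_Rlower_s16 T x x₀ hc),
    eq_einv_of_forall (Rupper_nonneg T x x₀) (liminf_logRate_nonneg T x x₀)
    (fun c hc h => ?_) (fun c hc h => ?_)⟩
  · exact le_of_not_gt fun h' => absurd h (not_lt.2 (Rupper_le T x x₀ hc h'))
  · exact le_of_not_gt fun h' => absurd h (not_lt.2 (le_liminf_logRate T x x₀ hc h'))
end
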